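/- arXiv:2102.04038 — 3 statements merged into one kernel-verified Lean document; each statement's English description precedes it below -/
import Mathlib

section
/- For all R, θ, L, Q > 0 there exists M_1 = M_1(R, θ, L, Q) > 0 with the following property. Let (c_k)_{k≥1} be a real sequence with 1 + θ ≤ c_k ≤ R for all k, set C_k = c_1 ⋯ c_k, let B ⊆ ℕ, and suppose there exist finite index sets I_k ⊆ ℕ^k (k = 1, 2, …), a function a defined on ∪_{k≥1} I_k taking values in B, and a function m : ∪_{k≥1} I_k → ℕ satisfying (C1)–(C4) and a((1)) ≥ M_1. Then dimH {A ∈ [a((1))^{1/c_1}, (a((1))+1)^{1/c_1}) : ⌊A^{C_k}⌋ ∈ B for all k ≥ 1} ≥ 1/(1 + R/(a((1)) log a((1)))). -/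
/-!
The set contains, up to countably many points, a Cantor set. To a vertex `j` of depth `k` in the
index tree (a list of length `k + 1`) belongs the interval
`[a(j)^(1/C_{k+1}), (a(j)+1)^(1/C_{k+1})]`; by (C2) these intervals are nested along branches, and
the common point `x` of a branch satisfies `a(j) ≤ x^{C_{k+1}} ≤ a(j) + 1` for all its vertices.
If all the right inequalities are strict, `⌊x^{C_{k+1}}⌋ = a(j) ∈ B`; otherwise `x` is a
`C_{k+1}`-th root of an integer, and such points form a countable set of dimension zero.

Write `X = a((1))` and `D_k = C_{k+1} / c_1`. By induction `X^{D_k} ≤ a(j) < (X+1)^{D_k}`.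
Two facts determine the dimension.

* By (C3), points from different vertices of depth `k` have `C_{k+1}`-th powers differing by at
  least one, so by Bernoulli's inequality they are at distance at least
  `ε_k = 1 / (C_{k+1} (X+1)^{D_k})`.
* By (C4), every vertex of depth `k` has at least
  `n_k = ⌈Q X^{D_{k+1} - D_k} (D_{k+1} log (X+1))^{-L}⌉ ≥ 1` children; the tree is pruned to have
  exactly `n_k` of them, so that its branches are the points of the product of the sets `Fin n_k`.

The uniform product measure, transported to `ℝ`, gives mass at most `d^s` to short intervals of
length `d` as soon as `n_0 ⋯ n_{k-1} (n_k ε_{k+1} / 2)^s ≥ 1` for large `k`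
(`le_dimH_range_of_separated`, the mass distribution principle). Taking logarithms, this condition
holds whenever `s (log X + R log (1 + 1/X)) < log X`, because `D_k` grows exponentially while the
remaining terms are quadratic in `k` (`growth_estimate`). The exponent
`s = 1 / (1 + R / (X log X))` qualifies since `log (1 + 1/X) < 1/X`.
-/

open Real Set

/-! ### Mass distribution on Cantor sets coded by digit sequences -/

/-- Points of an interval of length `d` with pairwise distances at least `ε` number at most
`d / ε + 1`: the map `x ↦ ⌊x / ε⌋` separates them. -/
lemma card_le_of_separated {ι : Type*} (T : Finset ι) (f : ι → ℝ) {x d ε : ℝ} (hε : 0 < ε)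
    (hf : ∀ v ∈ T, f v ∈ Icc x (x + d))
    (hsep : ∀ v ∈ T, ∀ w ∈ T, v ≠ w → ε ≤ |f v - f w|) (hd : 0 ≤ d) :
    (T.card : ℝ) ≤ d / ε + 1 := by
  have hinj : Set.InjOn (fun v => ⌊(f v - x) / ε⌋₊) T := by
    intro v hv w hw hvw
    by_contra hne
    have h1 := hsep v hv w hw hne
    have hv0 : 0 ≤ (f v - x) / ε := div_nonneg (by linarith [(hf v hv).1]) hε.le
    have hw0 : 0 ≤ (f w - x) / ε := div_nonneg (by linarith [(hf w hw).1]) hε.le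
    have a1 := Nat.floor_le hv0
    have a2 := Nat.lt_floor_add_one ((f v - x) / ε)
    have b1 := Nat.floor_le hw0
    have b2 := Nat.lt_floor_add_one ((f w - x) / ε)
    simp only at hvw
    rw [hvw] at a1 a2
    have h2 : |(f v - x) / ε - (f w - x) / ε| < 1 := by
      rw [abs_lt]; constructor <;> linarith
    rw [← sub_div, abs_div, abs_of_pos hε, div_lt_one hε] at h2
    have : f v - x - (f w - x) = f v - f w := by ring
    rw [this] at h2
    linarith
  have hmaps : Set.MapsTo (fun v => ⌊(f v - x) / ε⌋₊) T (Finset.range (⌊d / ε⌋₊ + 1)) := by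
    intro v hv
    simp only [Finset.coe_range, Set.mem_Iio, Nat.lt_succ_iff]
    apply Nat.floor_le_floor
    apply div_le_div_of_nonneg_right _ hε.le
    linarith [(hf v hv).2]
  have := Finset.card_le_card_of_injOn _ hmaps hinj
  rw [Finset.card_range] at this
  have h3 := Nat.floor_le (div_nonneg hd hε.le)
  have h4 : (T.card : ℝ) ≤ (⌊d / ε⌋₊ : ℝ) + 1 := by exact_mod_cast this
  linarith

/-- The law of a sequence of independent digits, the `k`-th one uniform on `Fin (p k + 1)`; the
shift by one keeps every digit set nonempty. -/
noncomputable def uniformDigits (p : ℕ → ℕ) :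
    MeasureTheory.Measure (∀ k, Fin (p k + 1)) :=
  MeasureTheory.Measure.infinitePi fun k => (PMF.uniformOfFintype (Fin (p k + 1))).toMeasure

instance (p : ℕ → ℕ) : MeasureTheory.IsProbabilityMeasure (uniformDigits p) := by
  unfold uniformDigits; infer_instance

lemma uniformDigits_cylinder (p : ℕ → ℕ) (x : ∀ k, Fin (p k + 1)) (k : ℕ) :
    uniformDigits p {ω | ∀ i < k, ω i = x i} =
      ENNReal.ofReal (∏ i ∈ Finset.range k, ((p i : ℝ) + 1))⁻¹ := by
  have : {ω : ∀ k, Fin (p k + 1) | ∀ i < k, ω i = x i} =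
      Set.pi (Finset.range k : Set ℕ) (fun i => {x i}) := by
    ext ω; simp [Set.mem_pi]
  rw [this, uniformDigits, MeasureTheory.Measure.infinitePi_pi _ (by simp), ← Finset.prod_inv_distrib,
    ENNReal.ofReal_prod_of_nonneg (fun i _ => by positivity)]
  refine Finset.prod_congr rfl fun i _ => ?_
  rw [PMF.toMeasure_uniformOfFintype_apply _ (by simp)]
  rw [ENNReal.ofReal_inv_of_pos (by positivity), ENNReal.ofReal_add (by positivity) (by simp)]
  simp

/-- An interval of length `d` with `ε (k + 1) ≤ d < ε k` meets the image of at most one cylinder of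
depth `k`, and of at most `2 d / ε (k + 1)` cylinders of depth `k + 1`. Each of the two counts
bounds its mass under the image of `uniformDigits p`. -/
lemma uniformDigits_preimage_Icc_le (p : ℕ → ℕ) (φ : (∀ k, Fin (p k + 1)) → ℝ) (ε : ℕ → ℝ)
    (hε : ∀ k, 0 < ε k)
    (hsep : ∀ k ω ω', (∃ i < k, ω i ≠ ω' i) → ε k ≤ |φ ω - φ ω'|)
    {k : ℕ} {x d : ℝ} (h1 : ε (k + 1) ≤ d) (h2 : d < ε k) :
    uniformDigits p (φ ⁻¹' Icc x (x + d)) ≤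
      ENNReal.ofReal ((∏ i ∈ Finset.range k, ((p i : ℝ) + 1))⁻¹ *
        min 1 (2 * d / (ε (k + 1) * (p k + 1)))) := by
  classical
  have hd : 0 < d := (hε _).trans_le h1
  rcases (φ ⁻¹' Icc x (x + d)).eq_empty_or_nonempty with he | ⟨ω₀, hω₀⟩
  · simp [he]
  have hagree : ∀ ω ∈ φ ⁻¹' Icc x (x + d), ∀ i < k, ω i = ω₀ i := by
    intro ω hω i hi
    by_contra hne
    have h3 := hsep k ω ω₀ ⟨i, hi, hne⟩
    have : |φ ω - φ ω₀| ≤ d := by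
      rw [abs_le]
      constructor <;> linarith [hω.1, hω.2, hω₀.1, hω₀.2]
    linarith
  have hNpos : 0 < ∏ i ∈ Finset.range k, ((p i : ℝ) + 1) :=
    Finset.prod_pos fun i _ => by positivity
  rcases min_choice 1 (2 * d / (ε (k + 1) * (p k + 1))) with hm | hm
  · rw [hm, mul_one, ← uniformDigits_cylinder p ω₀ k]
    exact MeasureTheory.measure_mono hagree
  rw [hm]
  set T : Finset (Fin (p k + 1)) :=
    Finset.univ.filter fun v => ∃ ω ∈ φ ⁻¹' Icc x (x + d), ω k = v with hT
  have hTm : ∀ v ∈ T, ∃ ω ∈ φ ⁻¹' Icc x (x + d), ω k = v := fun v hv => by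
    simpa [hT] using hv
  choose! g hg1 hg2 using hTm
  have hcard : (T.card : ℝ) ≤ 2 * d / ε (k + 1) := by
    have := card_le_of_separated T (fun v => φ (g v)) (x := x) (d := d) (hε (k + 1))
      (fun v hv => hg1 v hv) (fun v hv w hw hvw => hsep (k + 1) _ _ ⟨k, by omega, by
        rw [hg2 v hv, hg2 w hw]; exact hvw⟩) hd.le
    have h5 : 1 ≤ d / ε (k + 1) := by rw [le_div_iff₀ (hε _)]; linarith
    have : 2 * d / ε (k + 1) = d / ε (k + 1) + d / ε (k + 1) := by ring
    linarith
  have hsub : φ ⁻¹' Icc x (x + d) ⊆ ⋃ v ∈ T, {ω | ∀ i < k + 1, ω i = g v i} := by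
    intro ω hω
    have hv : ω k ∈ T := by simp only [hT, Finset.mem_filter, Finset.mem_univ, true_and]; exact ⟨ω, hω, rfl⟩
    simp only [Set.mem_iUnion]
    refine ⟨ω k, hv, fun i hi => ?_⟩
    rcases Nat.lt_succ_iff_lt_or_eq.1 hi with hi | rfl
    · rw [hagree ω hω i hi, hagree _ (hg1 _ hv) i hi]
    · exact (hg2 _ hv).symm
  calc uniformDigits p (φ ⁻¹' Icc x (x + d))
      ≤ ∑ v ∈ T, uniformDigits p {ω | ∀ i < k + 1, ω i = g v i} :=
        (MeasureTheory.measure_mono hsub).trans (MeasureTheory.measure_biUnion_finset_le _ _)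
    _ = ENNReal.ofReal (T.card * (∏ i ∈ Finset.range (k + 1), ((p i : ℝ) + 1))⁻¹) := by
        simp_rw [uniformDigits_cylinder]
        rw [Finset.sum_const, nsmul_eq_mul, ENNReal.ofReal_mul (by positivity)]
        simp
    _ ≤ _ := by
        apply ENNReal.ofReal_le_ofReal
        rw [Finset.prod_range_succ, mul_inv]
        calc (T.card : ℝ) * ((∏ i ∈ Finset.range k, ((p i : ℝ) + 1))⁻¹ * ((p k : ℝ) + 1)⁻¹)
            ≤ (2 * d / ε (k + 1)) * ((∏ i ∈ Finset.range k, ((p i : ℝ) + 1))⁻¹ * ((p k : ℝ) + 1)⁻¹) := by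
              gcongr
          _ = _ := by
              have := (hε (k+1)).ne'
              field_simp

/-- Dimension lower bound for a Cantor set coded by `φ`: if digit sequences that differ before
place `k` have images at distance at least `ε k`, and the product of the branching numbers
`p i + 1` for `i < k` eventually dominates `((p k + 1) * ε (k + 1) / 2) ^ (-s)`, then the range
of `φ` has dimension at least `s`. The image of `uniformDigits p` gives every short interval of
length `d` mass at most `d ^ s`, hence is bounded by the Hausdorff measure `μH[s]`. -/
lemma le_dimH_range_of_separated (p : ℕ → ℕ) (φ : (∀ k, Fin (p k + 1)) → ℝ) (hφ : Measurable φ)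
    (ε : ℕ → ℝ) (hε : ∀ k, 0 < ε k) (hε0 : Filter.Tendsto ε Filter.atTop (nhds 0))
    (hsep : ∀ k ω ω', (∃ i < k, ω i ≠ ω' i) → ε k ≤ |φ ω - φ ω'|)
    {s : ℝ} (hs0 : 0 < s) (hs1 : s ≤ 1)
    (hN : ∀ᶠ k in Filter.atTop, 1 ≤ (∏ i ∈ Finset.range k, ((p i : ℝ) + 1)) *
      ((p k + 1) * ε (k + 1) / 2) ^ s) :
    ENNReal.ofReal s ≤ dimH (Set.range φ) := by
  obtain ⟨k₀, hk₀⟩ := Filter.eventually_atTop.1 hN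
  have key : ∀ x d : ℝ, 0 < d → d < ε k₀ →
      uniformDigits p (φ ⁻¹' Icc x (x + d)) ≤ ENNReal.ofReal (d ^ s) := by
    intro x d hd hdk
    -- the first scale beyond `k₀` at or below `d`; no monotonicity of `ε` is needed
    have hex : ∃ k, ε (k₀ + k + 1) ≤ d := by
      obtain ⟨n, hn⟩ := Filter.eventually_atTop.1 (hε0.eventually (gt_mem_nhds hd))
      exact ⟨n, (hn _ (by omega)).le⟩
    classical
    obtain ⟨k, hk1, hk2⟩ : ∃ k, ε (k₀ + k + 1) ≤ d ∧ d < ε (k₀ + k) := by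
      refine ⟨Nat.find hex, Nat.find_spec hex, ?_⟩
      rcases Nat.eq_zero_or_pos (Nat.find hex) with h | h
      · rw [h]; exact hdk
      · have := Nat.find_min hex (m := Nat.find hex - 1) (by omega)
        rw [not_le] at this
        have e : k₀ + (Nat.find hex - 1) + 1 = k₀ + Nat.find hex := by omega
        rwa [e] at this
    refine (uniformDigits_preimage_Icc_le p φ ε hε hsep hk1 hk2).trans ?_
    apply ENNReal.ofReal_le_ofReal
    set K := k₀ + k
    have hK := hk₀ K (by omega)
    set N := ∏ i ∈ Finset.range K, ((p i : ℝ) + 1)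
    have hNpos : 0 < N := Finset.prod_pos fun i _ => by positivity
    have hε' := hε (K + 1)
    set y := 2 * d / (ε (K + 1) * (p K + 1)) with hy
    have hy0 : 0 < y := by positivity
    -- `min 1 y ≤ 1 ^ (1 - s) * y ^ s` interpolates between the two counting bounds
    have hmin : min 1 y ≤ y ^ s := by
      rcases le_total y 1 with h | h
      · rw [min_eq_right h]
        exact Real.self_le_rpow_of_le_one hy0.le h hs1
      · rw [min_eq_left h]
        exact Real.one_le_rpow h hs0.le
    have hyd : y ^ s * ((p K + 1) * ε (K + 1) / 2) ^ s = d ^ s := by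
      rw [← Real.mul_rpow hy0.le (by positivity), hy]
      congr 1
      field_simp
    calc N⁻¹ * min 1 y ≤ N⁻¹ * y ^ s := by gcongr
      _ ≤ N⁻¹ * (y ^ s * (N * ((p K + 1) * ε (K + 1) / 2) ^ s)) := by
          gcongr
          exact le_mul_of_one_le_right (by positivity) hK
      _ = y ^ s * ((p K + 1) * ε (K + 1) / 2) ^ s := by field_simp
      _ = d ^ s := hyd
  have hle : (uniformDigits p).map φ ≤ MeasureTheory.Measure.hausdorffMeasure s := by
    refine MeasureTheory.Measure.le_hausdorffMeasure s _ (ENNReal.ofReal (ε k₀ / 2))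
      (by simp [hε]) fun U hU => ?_
    rcases U.eq_empty_or_nonempty with rfl | hne
    · simp
    have hbd : Bornology.IsBounded U :=
      Metric.isBounded_iff_ediam_ne_top.2 (ne_top_of_le_ne_top ENNReal.ofReal_ne_top hU)
    rw [Real.ediam_eq hbd] at hU ⊢
    set d := sSup U - sInf U with hd
    have hd0 : 0 ≤ d := sub_nonneg.2 (Real.sInf_le_sSup _ hbd.bddBelow hbd.bddAbove)
    rw [ENNReal.ofReal_le_ofReal_iff (by linarith [hε k₀])] at hU
    rw [ENNReal.ofReal_rpow_of_nonneg hd0 hs0.le]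
    -- enlarging `U` to slightly longer intervals also covers the case of diameter zero
    have hlim : Filter.Tendsto (fun δ : ℝ => ENNReal.ofReal (δ ^ s)) (nhdsWithin d (Ioi d))
        (nhds (ENNReal.ofReal (d ^ s))) :=
      ((ENNReal.continuous_ofReal.comp (Real.continuous_rpow_const hs0.le)).tendsto d).mono_left
        nhdsWithin_le_nhds
    refine ge_of_tendsto hlim ?_
    filter_upwards [Ioo_mem_nhdsGT (show d < ε k₀ by linarith [hε k₀])] with δ hδ
    have hsub : U ⊆ Icc (sInf U) (sInf U + δ) := fun y hy =>
      ⟨csInf_le hbd.bddBelow hy, by linarith [le_csSup hbd.bddAbove hy, hδ.1]⟩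
    calc (uniformDigits p).map φ U ≤ (uniformDigits p).map φ (Icc (sInf U) (sInf U + δ)) :=
          MeasureTheory.measure_mono hsub
      _ = uniformDigits p (φ ⁻¹' Icc (sInf U) (sInf U + δ)) :=
          MeasureTheory.Measure.map_apply hφ measurableSet_Icc
      _ ≤ _ := key _ _ (by linarith [hδ.1]) hδ.2
  have h1 : 1 ≤ (uniformDigits p).map φ (Set.range φ) := by
    refine le_trans ?_ (MeasureTheory.Measure.le_map_apply hφ.aemeasurable _)
    simp
  have hcoe : ENNReal.ofReal s = ((s.toNNReal : NNReal) : ENNReal) := rfl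
  rw [hcoe]
  apply le_dimH_of_hausdorffMeasure_ne_zero
  rw [Real.coe_toNNReal s hs0.le]
  have := h1.trans (hle _)
  intro h0
  rw [h0] at this
  simp at this

/-! ### Growth estimates -/

lemma rpow_sub_rpow_le {x y p : ℝ} (hx : 0 ≤ x) (hy : 0 < y) (hp : 1 ≤ p) :
    y ^ p - x ^ p ≤ p * y ^ (p - 1) * (y - x) := by
  have h := one_add_mul_self_le_rpow_one_add (s := x / y - 1)
    (by linarith [div_nonneg hx hy.le]) hp
  have e : 1 + (x / y - 1) = x / y := by ring
  rw [e, Real.div_rpow hx hy.le, le_div_iff₀ (Real.rpow_pos_of_pos hy p)] at h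
  have e2 : y ^ p = y ^ (p - 1) * y := by
    rw [← Real.rpow_add_one hy.ne']; congr 1; ring
  have e3 : p * (x / y - 1) * y ^ p = p * y ^ (p - 1) * (x - y) := by
    rw [e2]; field_simp
  nlinarith

lemma eventually_mul_sq_le_pow {θ : ℝ} (hθ : 0 < θ) {η H : ℝ} (hη : 0 < η) (hH : 0 < H) :
    ∀ᶠ k : ℕ in Filter.atTop, H * ((k : ℝ) + 1) ^ 2 ≤ η * (1 + θ) ^ k := by
  have h1 := (tendsto_pow_const_div_const_pow_of_one_lt 2 (show (1 : ℝ) < 1 + θ by linarith)).comp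
    (Filter.tendsto_add_atTop_nat 1)
  have hpos : 0 < η / (H * (1 + θ)) := by positivity
  filter_upwards [h1.eventually (gt_mem_nhds hpos)] with k hk
  simp only [Function.comp] at hk
  rw [div_lt_div_iff₀ (by positivity) (by positivity), pow_succ (1 + θ)] at hk
  push_cast at hk
  have : (H * ((k : ℝ) + 1) ^ 2) * (1 + θ) < (η * (1 + θ) ^ k) * (1 + θ) := by linarith
  exact (lt_of_mul_lt_mul_right this (by positivity)).le

/-- The growth condition of `le_dimH_range_of_separated` for the exponent in the theorem. With
`l = log X` and `Λ = log (X + 1)`, the logarithm of the right-hand side is at least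
`D k * (l - s * (l + R * (Λ - l)))` up to an error quadratic in `k`, and `D k` grows
exponentially. -/
lemma growth_estimate {R θ L Q X c₁ : ℝ} (hθ : 0 < θ) (hR : 1 + θ ≤ R) (hL : 0 < L) (hQ : 0 < Q)
    (hX : 2 ≤ X) (hc₁ : 0 < c₁) (hc₁R : c₁ ≤ R) (D : ℕ → ℝ) (hD0 : D 0 = 1)
    (hD1 : ∀ k, (1 + θ) * D k ≤ D (k + 1)) (hD2 : ∀ k, D (k + 1) ≤ R * D k) (p : ℕ → ℕ)
    (hp : ∀ k, Q * X ^ (D (k + 1) - D k) * (D (k + 1) * Real.log (X + 1)) ^ (-L) ≤ (p k : ℝ) + 1) :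
    ∀ᶠ k in Filter.atTop, 1 ≤ (∏ i ∈ Finset.range k, ((p i : ℝ) + 1)) *
      ((p k + 1) * (1 / (c₁ * D (k + 1) * (X + 1) ^ D (k + 1))) / 2) ^
        (1 / (1 + R / (X * Real.log X))) := by
  set l := Real.log X with hl
  set Λ := Real.log (X + 1) with hΛ
  set s := 1 / (1 + R / (X * l)) with hs
  have hl0 : 0 < l := Real.log_pos (by linarith)
  have hΛl : l ≤ Λ := Real.log_le_log (by linarith) (by linarith)
  have hΛ0 : 0 < Λ := by linarith
  have hR0 : 0 < R := by linarith
  have hlR : 0 < Real.log R := Real.log_pos (by linarith)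
  have hXl : 0 < X * l := by positivity
  have hs0 : 0 < s := by positivity
  have hs1 : s ≤ 1 := by
    rw [hs, div_le_one (by positivity)]
    have : 0 < R / (X * l) := by positivity
    linarith
  have hDpow : ∀ k, (1 + θ) ^ k ≤ D k := by
    intro k
    induction k with
    | zero => simp [hD0]
    | succ k ih => rw [pow_succ']; nlinarith [hD1 k]
  have hDpos : ∀ k, 0 < D k := fun k => lt_of_lt_of_le (by positivity) (hDpow k)
  have hlogD : ∀ k, Real.log (D k) ≤ k * Real.log R := by
    intro k
    induction k with
    | zero => simp [hD0]
    | succ k ih =>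
      have := Real.log_le_log (hDpos _) (hD2 k)
      rw [Real.log_mul hR0.ne' (hDpos k).ne'] at this
      push_cast
      linarith
  set G := |Real.log Q| + L * (Real.log R + |Real.log Λ|) with hG
  have hG0 : 0 ≤ G := by positivity
  have hlogn : ∀ k, (D (k + 1) - D k) * l - G * (k + 1) ≤ Real.log ((p k : ℝ) + 1) := by
    intro k
    have hDk := hDpos (k + 1)
    have h1 : 0 < X ^ (D (k + 1) - D k) := Real.rpow_pos_of_pos (by linarith) _
    have h2 : 0 < (D (k + 1) * Λ) ^ (-L) := Real.rpow_pos_of_pos (by positivity) _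
    have h := Real.log_le_log (by positivity) (hp k)
    rw [Real.log_mul (by positivity) h2.ne', Real.log_mul hQ.ne' h1.ne',
      Real.log_rpow (by linarith), Real.log_rpow (by positivity),
      Real.log_mul hDk.ne' hΛ0.ne'] at h
    have h3 := hlogD (k + 1)
    push_cast at h3
    have h4 := neg_abs_le (Real.log Q)
    have h5 := le_abs_self (Real.log Λ)
    have hk : (0 : ℝ) ≤ k := Nat.cast_nonneg k
    have h6 : L * (Real.log (D (k + 1)) + Real.log Λ)
        ≤ L * ((k + 1) * Real.log R + |Real.log Λ|) := by gcongr
    have h7 : 0 ≤ k * |Real.log Q| := by positivity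
    have h8 : 0 ≤ k * (L * |Real.log Λ|) := by positivity
    rw [hG]
    nlinarith
  have hlogN : ∀ k : ℕ, (D k - 1) * l - G * (k : ℝ) ^ 2 ≤
      Real.log (∏ i ∈ Finset.range k, ((p i : ℝ) + 1)) := by
    intro k
    induction k with
    | zero => simp [hD0]
    | succ k ih =>
      have hpos : 0 < ∏ i ∈ Finset.range k, ((p i : ℝ) + 1) :=
        Finset.prod_pos fun i _ => by positivity
      rw [Finset.prod_range_succ, Real.log_mul hpos.ne' (by positivity)]
      have := hlogn k
      have hk : 0 ≤ G * (k : ℝ) := by positivity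
      push_cast
      nlinarith
  -- `Λ - l = log (1 + 1/X) < 1/X` is the slack that makes `η` positive
  have hslack : Λ - l < 1 / X := by
    rw [hΛ, hl, ← Real.log_div (by linarith) (by linarith)]
    have h := Real.log_lt_sub_one_of_pos (x := (X + 1) / X) (by positivity) (by
      intro h
      rw [div_eq_one_iff_eq (by linarith)] at h
      linarith)
    have e : (X + 1) / X - 1 = 1 / X := by field_simp; ring
    linarith
  set η := l - s * (l + R * (Λ - l)) with hη
  have hη0 : 0 < η := by
    have e : s * (l + R * (1 / X)) = l := by
      rw [hs]; field_simp
    have : s * (l + R * (Λ - l)) < s * (l + R * (1 / X)) := by gcongr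
    linarith
  have hlog2 : 0 < Real.log 2 := Real.log_pos (by norm_num)
  set H := l + 2 * G + 2 * Real.log R + Real.log 2 with hH
  have hH0 : 0 < H := by positivity
  filter_upwards [eventually_mul_sq_le_pow hθ hη0 hH0] with k hk
  have hNpos : 0 < ∏ i ∈ Finset.range k, ((p i : ℝ) + 1) :=
    Finset.prod_pos fun i _ => by positivity
  have hX1 : 0 < (X + 1) ^ D (k + 1) := Real.rpow_pos_of_pos (by linarith) _
  have hDk := hDpos (k + 1)
  have hE : 0 < ((p k : ℝ) + 1) * (1 / (c₁ * D (k + 1) * (X + 1) ^ D (k + 1))) / 2 := by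
    positivity
  rw [← Real.log_nonneg_iff (mul_pos hNpos (Real.rpow_pos_of_pos hE _)),
    Real.log_mul hNpos.ne' (Real.rpow_pos_of_pos hE _).ne', Real.log_rpow hE,
    Real.log_div (by positivity) (by norm_num), Real.log_mul (by positivity) (by positivity),
    one_div, Real.log_inv, Real.log_mul (by positivity) (by positivity),
    Real.log_mul (by positivity) (by positivity), Real.log_rpow (by linarith)]
  have a1 := hlogN k
  have a2 := hlogn k
  have a3 := hlogD (k + 1)
  have a4 := Real.log_le_log hc₁ hc₁R
  push_cast at a3
  set w := G * (k + 1) + (k + 2) * Real.log R + Real.log 2 with hw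
  have hw0 : 0 ≤ w := by positivity
  have hsw : s * w ≤ w := mul_le_of_le_one_left hw0 hs1
  have b1 : (D (k + 1) - D k) * l - D (k + 1) * Λ - w ≤ Real.log ((p k : ℝ) + 1) +
      -(Real.log c₁ + Real.log (D (k + 1)) + D (k + 1) * Λ) - Real.log 2 := by
    rw [hw]; linarith
  have b2 : -(D k * (l + R * (Λ - l))) - w ≤ (D (k + 1) - D k) * l - D (k + 1) * Λ - w := by
    have : D (k + 1) * (Λ - l) ≤ R * D k * (Λ - l) :=
      mul_le_mul_of_nonneg_right (hD2 k) (by linarith)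
    have e1 : (D (k + 1) - D k) * l - D (k + 1) * Λ = -(D k * l) - D (k + 1) * (Λ - l) := by ring
    have e2 : D k * (l + R * (Λ - l)) = D k * l + R * D k * (Λ - l) := by ring
    linarith
  have b3 := mul_le_mul_of_nonneg_left (b2.trans b1) hs0.le
  have b4 : η * (1 + θ) ^ k ≤ η * D k := mul_le_mul_of_nonneg_left (hDpow k) hη0.le
  have hk0 : (0 : ℝ) ≤ k := Nat.cast_nonneg k
  have b5 : l + G * (k : ℝ) ^ 2 + w ≤ H * ((k : ℝ) + 1) ^ 2 := by
    have hdiff : 0 ≤ l * (k * (k + 2)) + G * ((k : ℝ) ^ 2 + 3 * k + 1) +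
        Real.log R * (2 * (k : ℝ) ^ 2 + 3 * k) + Real.log 2 * (k * (k + 2)) := by positivity
    have e : H * ((k : ℝ) + 1) ^ 2 - (l + G * (k : ℝ) ^ 2 + w) =
        l * (k * (k + 2)) + G * ((k : ℝ) ^ 2 + 3 * k + 1) +
        Real.log R * (2 * (k : ℝ) ^ 2 + 3 * k) + Real.log 2 * (k * (k + 2)) := by
      rw [hw, hH]; ring
    linarith
  have b6 : s * (-(D k * (l + R * (Λ - l))) - w) = D k * η - D k * l - s * w := by
    rw [hη]; ring
  rw [b6] at b3
  linarith

/-! ### The index tree -/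

/-- The vertex `(1, f 0, …, f (k - 1))` of the index tree, encoded as a list of length `k + 1`. -/
def digitNode (f : ℕ → ℕ) : ℕ → List ℕ
  | 0 => [1]
  | k + 1 => digitNode f k ++ [f k]

lemma eq_of_digitNode_eq {f g : ℕ → ℕ} {k : ℕ} (h : digitNode f k = digitNode g k) :
    ∀ i < k, f i = g i := by
  induction k with
  | zero => intro i hi; omega
  | succ k ih =>
    intro i hi
    simp only [digitNode] at h
    obtain ⟨h1, h2⟩ := List.append_inj' h rfl
    rcases Nat.lt_succ_iff_lt_or_eq.1 hi with hi | rfl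
    · exact ih h1 i hi
    · simpa using h2

lemma measurable_comp_digitNode {p : ℕ → ℕ} (F : List ℕ → ℝ) (k : ℕ) :
    Measurable fun ω : ∀ k, Fin (p k + 1) => F (digitNode (fun i => (ω i : ℕ) + 1) k) := by
  let _ : MeasurableSpace (List ℕ) := ⊤
  have h : ∀ k, Measurable fun ω : ∀ k, Fin (p k + 1) =>
      digitNode (fun i => (ω i : ℕ) + 1) k := by
    intro k
    induction k with
    | zero => exact measurable_const
    | succ k ih =>
      have hg : Measurable fun q : List ℕ × Fin (p k + 1) => q.1 ++ [(q.2 : ℕ) + 1] :=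
        measurable_of_countable _
      exact hg.comp (ih.prodMk (measurable_pi_apply k))
  exact measurable_from_top.comp (h k)

lemma endpoints_le_of_chain {m : ℕ} {b : ℕ → ℕ} (hb : ∀ i, 1 ≤ i → i < m → b i < b (i + 1))
    {i : ℕ} (hi : 1 ≤ i) (him : i ≤ m) : b 1 ≤ b i ∧ b i ≤ b m := by
  have hmono : ∀ u v, 1 ≤ u → u ≤ v → v ≤ m → b u ≤ b v := by
    intro u v hu huv
    induction v, huv using Nat.le_induction with
    | base => intro _; exact le_rfl
    | succ v hv ih => intro hvm; exact (ih (by omega)).trans (hb v (by omega) (by omega)).le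
  exact ⟨hmono 1 i le_rfl hi him, hmono i m hi him le_rfl⟩

/-- **Proposition 5.1.** Tuples in `ℕ^k` are encoded as lists of length `k`; `(j, i)` is
`j ++ [i]`, and the one-entry tuple `(1)` is `[1]`.

For all `R, θ, L, Q > 0` there is `M₁ = M₁(R, θ, L, Q) > 0` with: for every sequence `(c_k)`
with `1 + θ ≤ c_k ≤ R` (and `C_k = c_1 ⋯ c_k`), any `B ⊆ ℕ`, and any `I_k ⊆ ℕ^k`,
`a : ⋃_k I_k → B`, `m : ⋃_k I_k → ℕ` satisfying (C1)–(C4) with `a((1)) ≥ M₁`, one has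
`dimH {A ∈ [a((1))^{1/c₁}, (a((1))+1)^{1/c₁}) : ⌊A^{C_k}⌋ ∈ B for all k ≥ 1}
  ≥ 1/(1 + R/(a((1)) log a((1))))`. -/
theorem hausdorff_dim_lower_bound_general_construction
    (R θ L Q : ℝ) (hR : 0 < R) (hθ : 0 < θ) (hL : 0 < L) (hQ : 0 < Q) :
    ∃ M₁ : ℝ, 0 < M₁ ∧
      ∀ c : ℕ → ℝ, (∀ k ≥ 1, 1 + θ ≤ c k ∧ c k ≤ R) →
      ∀ C : ℕ → ℝ, (∀ k ≥ 1, C k = ∏ i ∈ Finset.Icc 1 k, c i) →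
      ∀ (B : Set ℕ) (I : ℕ → Finset (List ℕ)) (a m : List ℕ → ℕ),
        -- index sets live in ℕ^k
        (∀ k ≥ 1, ∀ j ∈ I k, j.length = k) →
        -- `a` takes values in `B`
        (∀ k ≥ 1, ∀ j ∈ I k, a j ∈ B) →
        -- (C1)
        I 1 = {[1]} →
        (∀ k, 2 ≤ k → ∀ l : List ℕ,
          l ∈ I k ↔ ∃ j ∈ I (k - 1), ∃ i : ℕ, 1 ≤ i ∧ i ≤ m j ∧ l = j ++ [i]) →
        -- (C2)
        (∀ k, 2 ≤ k → ∀ j ∈ I (k - 1),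
          ((a j : ℝ) ^ c k ≤ (a (j ++ [1]) : ℝ)) ∧
          (∀ i : ℕ, 1 ≤ i → i < m j → a (j ++ [i]) < a (j ++ [i + 1])) ∧
          ((a (j ++ [m j]) : ℝ) ≤ ((a j : ℝ) + 1) ^ c k - 1)) →
        -- (C3)
        (∀ k, 2 ≤ k → ∀ j ∈ I (k - 1), ∀ j' ∈ I (k - 1), j ≠ j' →
          2 ≤ |(a j : ℝ) - (a j' : ℝ)|) →
        -- (C4)
        (∀ k, 2 ≤ k → ∀ j ∈ I (k - 1),
          Q * (a j : ℝ) ^ (c k - 1) * (c k * Real.log (a j)) ^ (-L) ≤ (m j : ℝ)) →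
        M₁ ≤ (a [1] : ℝ) →
        ENNReal.ofReal (1 / (1 + R / ((a [1] : ℝ) * Real.log (a [1])))) ≤
          dimH {A : ℝ |
            A ∈ Set.Ico ((a [1] : ℝ) ^ (1 / c 1)) (((a [1] : ℝ) + 1) ^ (1 / c 1)) ∧
            ∀ k ≥ 1, ⌊A ^ C k⌋₊ ∈ B} := by
  -- any threshold above 1 works: `log X > 0` is all that is needed, since `D k` grows exponentially
  refine ⟨2, by norm_num, ?_⟩
  intro c hc C hC B I a m _ hB hI1 hIk hC2 hC3 hC4 hX
  set X : ℝ := (a [1] : ℝ) with hXdef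
  have hRθ : 1 + θ ≤ R := (hc 1 le_rfl).1.trans (hc 1 le_rfl).2
  have hcpos : ∀ k, 1 ≤ k → 0 < c k := fun k hk => by linarith [(hc k hk).1]
  set Λ := Real.log (X + 1) with hΛ
  have hΛ0 : 0 < Λ := Real.log_pos (by linarith)
  set D : ℕ → ℝ := fun k => ∏ i ∈ Finset.range k, c (i + 2) with hD
  have hD0 : D 0 = 1 := by simp [hD]
  have hDs : ∀ k, D (k + 1) = D k * c (k + 2) := fun k => by simp [hD, Finset.prod_range_succ]
  have hD1 : ∀ k, 1 ≤ D k := by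
    intro k
    induction k with
    | zero => rw [hD0]
    | succ k ih => rw [hDs]; nlinarith [(hc (k + 2) (by omega)).1]
  have hDpos : ∀ k, 0 < D k := fun k => by linarith [hD1 k]
  have hCD : ∀ k, C (k + 1) = c 1 * D k := by
    intro k
    rw [hC _ (by omega)]
    induction k with
    | zero => simp [hD0]
    | succ k ih => rw [Finset.prod_Icc_succ_top (by omega), ih, hDs]; ring
  have hC1 : ∀ k, 1 ≤ C (k + 1) := fun k => by
    rw [hCD]; nlinarith [hD1 k, (hc 1 le_rfl).1]
  have hCs : ∀ k, C (k + 1 + 1) = C (k + 1) * c (k + 2) := fun k => by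
    rw [hCD, hCD, hDs]; ring
  -- `v k` bounds from below the number of children of every vertex of depth `k`. Exactly `⌈v k⌉`
  -- children are kept, so that the branching depends on the depth only; `p k` is that number
  -- minus one.
  set v : ℕ → ℝ := fun k => Q * X ^ (D (k + 1) - D k) * (D (k + 1) * Λ) ^ (-L) with hv
  have hv0 : ∀ k, 0 < v k := fun k => by
    have := hDpos (k + 1)
    have : 0 < X ^ (D (k + 1) - D k) := Real.rpow_pos_of_pos (by linarith) _
    have : 0 < (D (k + 1) * Λ) ^ (-L) := Real.rpow_pos_of_pos (by positivity) _
    positivity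
  set p : ℕ → ℕ := fun k => ⌈v k⌉₊ - 1 with hp
  have hp1 : ∀ k, p k + 1 = ⌈v k⌉₊ := fun k => by
    have : 0 < ⌈v k⌉₊ := Nat.ceil_pos.2 (hv0 k)
    simp only [hp]; omega
  have hpv : ∀ k, v k ≤ (p k : ℝ) + 1 := fun k => by
    have := Nat.le_ceil (v k)
    rw [← hp1] at this
    exact_mod_cast this
  have hchild : ∀ k, ∀ j ∈ I (k + 1), ∀ i, 1 ≤ i → i ≤ m j →
      j ++ [i] ∈ I (k + 2) ∧ (a j : ℝ) ^ c (k + 2) ≤ a (j ++ [i]) ∧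
        (a (j ++ [i]) : ℝ) + 1 ≤ ((a j : ℝ) + 1) ^ c (k + 2) := by
    intro k j hj i hi him
    obtain ⟨h1, h2, h3⟩ := hC2 (k + 2) (by omega) j hj
    obtain ⟨h4, h5⟩ := endpoints_le_of_chain (b := fun i => a (j ++ [i])) h2 hi him
    have h4' : (a (j ++ [1]) : ℝ) ≤ a (j ++ [i]) := by exact_mod_cast h4
    have h5' : (a (j ++ [i]) : ℝ) ≤ a (j ++ [m j]) := by exact_mod_cast h5
    exact ⟨(hIk (k + 2) (by omega) _).2 ⟨j, hj, i, hi, him, rfl⟩, by linarith, by linarith⟩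
  have hvm : ∀ k, ∀ j ∈ I (k + 1), X ^ D k ≤ (a j : ℝ) → (a j : ℝ) + 1 ≤ (X + 1) ^ D k →
      p k + 1 ≤ m j := by
    intro k j hj h1 h2
    rw [hp1, Nat.ceil_le]
    refine le_trans ?_ (hC4 (k + 2) (by omega) j hj)
    have hck := hc (k + 2) (by omega)
    have hXa : X ≤ (a j : ℝ) :=
      (Real.self_le_rpow_of_one_le (by linarith) (hD1 k)).trans h1
    have hla : 0 < Real.log (a j) := Real.log_pos (by linarith)
    have hlog : Real.log (a j) ≤ D k * Λ := by
      rw [hΛ, ← Real.log_rpow (by linarith)]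
      exact Real.log_le_log (by linarith) (by linarith)
    have e1 : X ^ (D (k + 1) - D k) ≤ (a j : ℝ) ^ (c (k + 2) - 1) := by
      have : D (k + 1) - D k = D k * (c (k + 2) - 1) := by rw [hDs]; ring
      rw [this, Real.rpow_mul (by linarith)]
      exact Real.rpow_le_rpow (Real.rpow_nonneg (by linarith) _) h1 (by linarith)
    have e2 : (D (k + 1) * Λ) ^ (-L) ≤ (c (k + 2) * Real.log (a j)) ^ (-L) := by
      have hc0 := hcpos (k + 2) (by omega)
      refine Real.rpow_le_rpow_of_nonpos (by positivity) ?_ (by linarith)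
      rw [hDs]
      nlinarith
    have := hDpos (k + 1)
    simp only [hv]
    gcongr
  let node : (∀ k, Fin (p k + 1)) → ℕ → List ℕ := fun ω => digitNode fun i => (ω i : ℕ) + 1
  have hnode : ∀ ω k, node ω k ∈ I (k + 1) ∧ X ^ D k ≤ (a (node ω k) : ℝ) ∧
      (a (node ω k) : ℝ) + 1 ≤ (X + 1) ^ D k := by
    intro ω k
    induction k with
    | zero => simp [node, digitNode, hI1, hD0, hXdef]
    | succ k ih =>
      obtain ⟨h1, h2, h3⟩ := ih
      have h4 := hvm k _ h1 h2 h3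
      obtain ⟨h5, h6, h7⟩ := hchild k _ h1 ((ω k : ℕ) + 1) (by omega)
        (by have := (ω k).isLt; omega)
      have hc0 := hcpos (k + 2) (by omega)
      refine ⟨h5, ?_, ?_⟩
      · rw [hDs, Real.rpow_mul (by linarith)]
        exact (Real.rpow_le_rpow (Real.rpow_nonneg (by linarith) _) h2 hc0.le).trans h6
      · rw [hDs, Real.rpow_mul (by linarith)]
        exact h7.trans (Real.rpow_le_rpow (by positivity) h3 hc0.le)
  have hstep : ∀ ω k, (a (node ω k) : ℝ) ^ c (k + 2) ≤ a (node ω (k + 1)) ∧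
      (a (node ω (k + 1)) : ℝ) + 1 ≤ ((a (node ω k) : ℝ) + 1) ^ c (k + 2) := by
    intro ω k
    obtain ⟨h1, h2, h3⟩ := hnode ω k
    exact (hchild k _ h1 ((ω k : ℕ) + 1) (by omega)
      (by have := hvm k _ h1 h2 h3; have := (ω k).isLt; omega)).2
  -- the intervals of all `A` with `A ^ C (k + 1)` between `a` and `a + 1` are nested along a branch
  let lo : (∀ k, Fin (p k + 1)) → ℕ → ℝ := fun ω k => (a (node ω k) : ℝ) ^ (1 / C (k + 1))
  let hi : (∀ k, Fin (p k + 1)) → ℕ → ℝ := fun ω k => ((a (node ω k) : ℝ) + 1) ^ (1 / C (k + 1))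
  let φ : (∀ k, Fin (p k + 1)) → ℝ := fun ω => ⨆ k, lo ω k
  have hroot : ∀ k (x : ℝ), 0 ≤ x → (x ^ c (k + 2)) ^ (1 / C (k + 1 + 1)) = x ^ (1 / C (k + 1)) := by
    intro k x hx
    rw [← Real.rpow_mul hx, hCs]
    congr 1
    have := hcpos (k + 2) (by omega)
    have := hC1 k
    field_simp
  have hCinv : ∀ k, 0 ≤ 1 / C (k + 1) := fun k => by
    have := hC1 k
    positivity
  have hmem : ∀ ω k, φ ω ∈ Icc (lo ω k) (hi ω k) := by
    intro ω k
    have hlo : Monotone (lo ω) := monotone_nat_of_le_succ fun k => by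
      simp only [lo]
      rw [← hroot k _ (Nat.cast_nonneg _)]
      exact Real.rpow_le_rpow (by positivity) (hstep ω k).1 (hCinv _)
    have hhi : Antitone (hi ω) := antitone_nat_of_succ_le fun k => by
      simp only [hi]
      rw [← hroot k _ (by positivity)]
      exact Real.rpow_le_rpow (by positivity) (hstep ω k).2 (hCinv _)
    have hle : lo ω ≤ hi ω := fun k =>
      Real.rpow_le_rpow (by positivity) (by linarith) (hCinv _)
    exact Set.mem_iInter.1 (hlo.ciSup_mem_iInter_Icc_of_antitone hhi hle) k
  have hφ0 : ∀ ω, 0 ≤ φ ω := fun ω =>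
    le_trans (Real.rpow_nonneg (Nat.cast_nonneg _) _) (hmem ω 0).1
  have hφpow : ∀ ω k, (a (node ω k) : ℝ) ≤ φ ω ^ C (k + 1) ∧
      φ ω ^ C (k + 1) ≤ (a (node ω k) : ℝ) + 1 := by
    intro ω k
    have hCk := hC1 k
    obtain ⟨h1, h2⟩ := hmem ω k
    have e : ∀ x : ℝ, 0 ≤ x → (x ^ (1 / C (k + 1))) ^ C (k + 1) = x := fun x hx => by
      rw [← Real.rpow_mul hx, one_div_mul_cancel (by linarith), Real.rpow_one]
    constructor
    · have := Real.rpow_le_rpow (Real.rpow_nonneg (Nat.cast_nonneg _) _) h1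
        (show 0 ≤ C (k + 1) by linarith)
      rwa [e _ (Nat.cast_nonneg _)] at this
    · have := Real.rpow_le_rpow (hφ0 ω) h2 (show 0 ≤ C (k + 1) by linarith)
      rwa [e _ (by positivity)] at this
  have hφm : Measurable φ :=
    Measurable.iSup fun k => measurable_comp_digitNode (fun l => (a l : ℝ) ^ (1 / C (k + 1))) k
  set ε : ℕ → ℝ := fun k => 1 / (c 1 * D k * (X + 1) ^ D k) with hεdef
  have hc1 := hcpos 1 le_rfl
  have hε : ∀ k, 0 < ε k := fun k => by
    have := hDpos k
    have : 0 < (X + 1) ^ D k := Real.rpow_pos_of_pos (by linarith) _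
    positivity
  -- distinct branches at depth `k` have `a`-values at least 2 apart, so the `C`-th powers differ
  -- by at least 1
  have hsep_lt : ∀ k ω ω', (a (node ω k) : ℝ) + 2 ≤ a (node ω' k) → ε k ≤ φ ω' - φ ω := by
    intro k ω ω' h
    have h1 := (hφpow ω k).2
    have h2 := (hφpow ω' k).1
    have h3 : φ ω' ^ C (k + 1) ≤ (X + 1) ^ D k := (hφpow ω' k).2.trans (hnode ω' k).2.2
    have hpowpos : 1 ≤ φ ω' ^ C (k + 1) := by
      have : (0 : ℝ) ≤ a (node ω k) := Nat.cast_nonneg _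
      linarith
    have hCk := hC1 k
    have hpos : 1 ≤ φ ω' := by
      by_contra hlt
      have := Real.rpow_lt_one (hφ0 ω') (not_le.1 hlt) (show 0 < C (k + 1) by linarith)
      linarith
    have h4 := rpow_sub_rpow_le (hφ0 ω) (show 0 < φ ω' by linarith) hCk
    have h5 : φ ω' ^ (C (k + 1) - 1) ≤ (X + 1) ^ D k :=
      (Real.rpow_le_rpow_of_exponent_le hpos (by linarith)).trans h3
    have h6 : φ ω < φ ω' := by
      by_contra hle
      have := Real.rpow_le_rpow (hφ0 ω') (not_lt.1 hle) (show 0 ≤ C (k + 1) by linarith)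
      linarith
    have h7 : C (k + 1) * φ ω' ^ (C (k + 1) - 1) * (φ ω' - φ ω) ≤
        C (k + 1) * (X + 1) ^ D k * (φ ω' - φ ω) := by
      have : 0 ≤ φ ω' - φ ω := by linarith
      gcongr
    have h8 : 0 < (X + 1) ^ D k := Real.rpow_pos_of_pos (by linarith) _
    have hDk := hDpos k
    simp only [hεdef]
    rw [div_le_iff₀ (by positivity), ← hCD]
    linarith
  have hsep : ∀ k ω ω', (∃ i < k, ω i ≠ ω' i) → ε k ≤ |φ ω - φ ω'| := by
    rintro k ω ω' ⟨i, hik, hne⟩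
    have hnn : node ω k ≠ node ω' k := fun h => hne <| by
      have := eq_of_digitNode_eq h i hik
      exact Fin.ext (by omega)
    have h2 := hC3 (k + 2) (by omega) _ (hnode ω k).1 _ (hnode ω' k).1 hnn
    rcases le_abs.1 h2 with h | h
    · exact (hsep_lt k ω' ω (by linarith)).trans (le_abs_self _)
    · rw [abs_sub_comm]
      exact (hsep_lt k ω ω' (by linarith)).trans (le_abs_self _)
  have hDtop : Filter.Tendsto D Filter.atTop Filter.atTop := by
    have hpow : ∀ k, (1 + θ) ^ k ≤ D k := by
      intro k
      induction k with
      | zero => simp [hD0]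
      | succ k ih =>
        rw [pow_succ, hDs]
        exact mul_le_mul ih (hc (k + 2) (by omega)).1 (by linarith) (hDpos k).le
    exact Filter.tendsto_atTop_mono hpow (tendsto_pow_atTop_atTop_of_one_lt (by linarith))
  have hε0 : Filter.Tendsto ε Filter.atTop (nhds 0) := by
    have h1 : Filter.Tendsto (fun k => c 1 * D k) Filter.atTop Filter.atTop :=
      hDtop.const_mul_atTop hc1
    refine squeeze_zero (fun k => (hε k).le) (fun k => ?_) h1.inv_tendsto_atTop
    have hDk := hDpos k
    have h2 : 1 ≤ (X + 1) ^ D k := Real.one_le_rpow (by linarith) hDk.le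
    simp only [hεdef, Pi.inv_apply]
    rw [← one_div]
    apply one_div_le_one_div_of_le (by positivity)
    exact le_mul_of_one_le_right (by positivity) h2
  have hlX : 0 < Real.log X := Real.log_pos (by linarith)
  have hXl : 0 < X * Real.log X := by positivity
  have hs1 : 1 / (1 + R / (X * Real.log X)) ≤ 1 := by
    rw [div_le_one (by positivity)]
    have : 0 < R / (X * Real.log X) := by positivity
    linarith
  have hdim := le_dimH_range_of_separated p φ hφm ε hε hε0 hsep
    (s := 1 / (1 + R / (X * Real.log X))) (by positivity) hs1
    (growth_estimate hθ hRθ hL hQ hX hc1 (hc 1 le_rfl).2 D hD0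
      (fun k => by
        rw [hDs, mul_comm]
        exact mul_le_mul_of_nonneg_left (hc (k + 2) (by omega)).1 (hDpos k).le)
      (fun k => by
        rw [hDs, mul_comm]
        exact mul_le_mul_of_nonneg_right (hc (k + 2) (by omega)).2 (hDpos k).le) p hpv)
  refine hdim.trans ?_
  -- `φ ω` can fail to lie in the target set only if some power `φ ω ^ C (k + 1)` attains the
  -- excluded right endpoint, an integer; there are countably many such points
  set E : Set ℝ := Set.range fun q : ℕ × ℕ => (q.1 : ℝ) ^ (1 / C (q.2 + 1)) with hE
  have hEc : E.Countable := Set.countable_range _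
  set S := {A : ℝ | A ∈ Set.Ico (X ^ (1 / c 1)) ((X + 1) ^ (1 / c 1)) ∧
            ∀ k ≥ 1, ⌊A ^ C k⌋₊ ∈ B} with hS
  have hsub : Set.range φ ⊆ S ∪ E := by
    rintro _ ⟨ω, rfl⟩
    by_cases h : ∃ k, φ ω ^ C (k + 1) = (a (node ω k) : ℝ) + 1
    · obtain ⟨k, hk⟩ := h
      right
      refine ⟨(a (node ω k) + 1, k), ?_⟩
      have hCk := hC1 k
      simp only
      push_cast
      rw [← hk, ← Real.rpow_mul (hφ0 ω), mul_one_div_cancel (by linarith), Real.rpow_one]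
    · left
      push Not at h
      have hlt : ∀ k, φ ω ^ C (k + 1) < (a (node ω k) : ℝ) + 1 := fun k =>
        lt_of_le_of_ne (hφpow ω k).2 (h k)
      refine ⟨⟨?_, ?_⟩, ?_⟩
      · have := (hmem ω 0).1
        simpa [lo, node, digitNode, hCD, hD0, hXdef] using this
      · refine lt_of_le_of_ne ?_ ?_
        · have := (hmem ω 0).2
          simpa [hi, node, digitNode, hCD, hD0, hXdef] using this
        · intro he
          refine h 0 ?_
          rw [he, hCD, hD0, mul_one, ← Real.rpow_mul (by linarith),
            one_div_mul_cancel hc1.ne', Real.rpow_one]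
          rfl
      · intro k hk
        obtain ⟨k, rfl⟩ : ∃ k', k = k' + 1 := ⟨k - 1, by omega⟩
        have : ⌊φ ω ^ C (k + 1)⌋₊ = a (node ω k) :=
          (Nat.floor_eq_iff (Real.rpow_nonneg (hφ0 ω) _)).2 ⟨(hφpow ω k).1, hlt k⟩
        rw [this]
        exact hB (k + 1) (by omega) _ (hnode ω k).1
  calc dimH (Set.range φ) ≤ dimH (S ∪ E) := dimH_mono hsub
    _ = dimH S := by rw [dimH_union, dimH_countable hEc]; simp
end

section
/- Let R, θ, L, Q > 0, let (c_k)_{k≥1} be a real sequence with 1 + θ ≤ c_k ≤ R for all k, set C_k = c_1 ⋯ c_k, let B ⊆ ℕ, and suppose there exist finite index sets I_k ⊆ ℕ^k (k = 1, 2, …), a function a defined on ∪_{k≥1} I_k taking values in B with a((1)) ≥ 2, and a function m : ∪_{k≥1} I_k → ℕ satisfying (C1)–(C4). Then for every k ≥ 2 and any two distinct tuples j, j' ∈ I_k with a(j) < a(j'), one has a(j')^{1/C_k} − (a(j)+1)^{1/C_k} ≥ (1/C_k) · (a((1))+1)^{(1 − C_k)/C_1}; that is, the k-th level intervals [a(j)^{1/C_k},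 (a(j)+1)^{1/C_k}) are separated by gaps of at least (1/C_k)(a((1))+1)^{(1−C_k)/C_1}. -/
/-!
By (C3) at the next level, two distinct values `a(j) < a(j')` on level `k` differ by at least `2`,
so `a(j)+1` and `a(j')` differ by at least `1`. Concavity of `t ↦ t^{1/C_k}`
(`rpow_sub_rpow_ge_of_add_one_le`) turns this into a gap of at least
`(1/C_k) a(j')^{1/C_k - 1}`. Iterating the upper bound in (C2) gives
`a(j') + 1 ≤ (a((1))+1)^{C_k/C_1}`, and since the exponent `1/C_k - 1` is nonpositive, inserting
this bound yields the claim.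
-/

open Real Set

/-- Holds because the tangent line of the concave function `t ↦ t ^ p` at `y` lies above its graph,
which is Bernoulli's inequality for `x / y`. -/
lemma rpow_sub_rpow_ge_of_add_one_le {p x y : ℝ} (hp0 : 0 ≤ p) (hp1 : p ≤ 1) (hx : 0 ≤ x)
    (hxy : x + 1 ≤ y) : p * y ^ (p - 1) ≤ y ^ p - x ^ p := by
  have hy : 0 < y := by linarith
  have hb := _root_.rpow_one_add_le_one_add_mul_self (s := x / y - 1) (p := p)
    (by linarith [div_nonneg hx hy.le]) hp0 hp1
  rw [add_sub_cancel, Real.div_rpow hx hy.le, div_le_iff₀ (Real.rpow_pos_of_pos hy p)] at hb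
  have hyp : y ^ p = y ^ (p - 1) * y := by
    rw [Real.rpow_sub_one hy.ne', div_mul_cancel₀ _ hy.ne']
  have hpos : 0 < y ^ (p - 1) := Real.rpow_pos_of_pos hy _
  have hexp : (1 + p * (x / y - 1)) * y ^ p = y ^ p - p * y ^ (p - 1) * (y - x) := by
    rw [hyp]; field_simp; ring
  have : p * y ^ (p - 1) * 1 ≤ p * y ^ (p - 1) * (y - x) :=
    mul_le_mul_of_nonneg_left (by linarith) (by positivity)
  linarith

/-- Consecutive growth of a sequence on `[1, n]` bounds every term by the last one. -/
lemma le_last_of_lt_succ {f : ℕ → ℕ} {n : ℕ} (hf : ∀ i, 1 ≤ i → i < n → f i < f (i + 1))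
    {i : ℕ} (hi : 1 ≤ i) (hin : i ≤ n) : f i ≤ f n := by
  induction n, hin using Nat.le_induction with
  | base => exact le_rfl
  | succ n hn ih =>
    exact (ih fun i h1 h2 => hf i h1 (by omega)).trans (hf n (by omega) (by omega)).le

/-- **Lemma 5.3 (gaps between level intervals).** Tuples in `ℕ^k` are encoded as lists of
length `k`; `(j, i)` is `j ++ [i]`, and the one-entry tuple `(1)` is `[1]`.

Under (C1)–(C4) with `1 + θ ≤ c_k ≤ R` and `a((1)) ≥ 2`, for every `k ≥ 2` and distinct
`j, j' ∈ I_k` with `a(j) < a(j')`, one has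
`a(j')^{1/C_k} - (a(j)+1)^{1/C_k} ≥ (1/C_k) (a((1))+1)^{(1 - C_k)/C_1}`. -/
theorem level_intervals_gap_lower_bound
    (R θ L Q : ℝ) (hR : 0 < R) (hθ : 0 < θ) (hL : 0 < L) (hQ : 0 < Q)
    (c : ℕ → ℝ) (hc : ∀ k ≥ 1, 1 + θ ≤ c k ∧ c k ≤ R)
    (C : ℕ → ℝ) (hC : ∀ k ≥ 1, C k = ∏ i ∈ Finset.Icc 1 k, c i)
    (B : Set ℕ) (I : ℕ → Finset (List ℕ)) (a m : List ℕ → ℕ)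
    -- index sets live in ℕ^k
    (hlen : ∀ k ≥ 1, ∀ j ∈ I k, j.length = k)
    -- `a` takes values in `B`
    (haB : ∀ k ≥ 1, ∀ j ∈ I k, a j ∈ B)
    -- `a((1)) ≥ 2`
    (ha1 : 2 ≤ a [1])
    -- (C1)
    (hI1 : I 1 = {[1]})
    (hIk : ∀ k, 2 ≤ k → ∀ l : List ℕ,
      l ∈ I k ↔ ∃ j ∈ I (k - 1), ∃ i : ℕ, 1 ≤ i ∧ i ≤ m j ∧ l = j ++ [i])
    -- (C2)
    (hC2 : ∀ k, 2 ≤ k → ∀ j ∈ I (k - 1),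
      ((a j : ℝ) ^ c k ≤ (a (j ++ [1]) : ℝ)) ∧
      (∀ i : ℕ, 1 ≤ i → i < m j → a (j ++ [i]) < a (j ++ [i + 1])) ∧
      ((a (j ++ [m j]) : ℝ) ≤ ((a j : ℝ) + 1) ^ c k - 1))
    -- (C3)
    (hC3 : ∀ k, 2 ≤ k → ∀ j ∈ I (k - 1), ∀ j' ∈ I (k - 1), j ≠ j' →
      2 ≤ |(a j : ℝ) - (a j' : ℝ)|)
    -- (C4)
    (hC4 : ∀ k, 2 ≤ k → ∀ j ∈ I (k - 1),
      Q * (a j : ℝ) ^ (c k - 1) * (c k * Real.log (a j)) ^ (-L) ≤ (m j : ℝ)) :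
    ∀ k, 2 ≤ k → ∀ j ∈ I k, ∀ j' ∈ I k, j ≠ j' → a j < a j' →
      (1 / C k) * ((a [1] : ℝ) + 1) ^ ((1 - C k) / C 1) ≤
        (a j' : ℝ) ^ (1 / C k) - ((a j : ℝ) + 1) ^ (1 / C k) := by
  have hc1 : ∀ k ≥ 1, 1 < c k := fun k hk => by linarith [(hc k hk).1]
  have hCone : C 1 = c 1 := by rw [hC 1 le_rfl]; simp
  have hC1pos : 0 < C 1 := by rw [hCone]; linarith [hc1 1 le_rfl]
  have hCsucc : ∀ k ≥ 1, C (k + 1) = C k * c (k + 1) := fun k hk => by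
    rw [hC k hk, hC (k + 1) (by omega), Finset.prod_Icc_succ_top (by omega)]
  have hCge : ∀ k ≥ 1, 1 ≤ C k := by
    intro k hk
    induction k, hk using Nat.le_induction with
    | base => rw [hCone]; exact (hc1 1 le_rfl).le
    | succ k hk ih =>
      rw [hCsucc k hk]
      nlinarith [hc1 (k + 1) (by omega)]
  have hbase : (0 : ℝ) < (a [1] : ℝ) + 1 := by positivity
  have hbound : ∀ k ≥ 1, ∀ j ∈ I k, (a j : ℝ) + 1 ≤ ((a [1] : ℝ) + 1) ^ (C k / C 1) := by
    intro k hk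
    induction k, hk using Nat.le_induction with
    | base =>
      intro j hj
      rw [hI1, Finset.mem_singleton] at hj
      rw [hj, div_self hC1pos.ne', Real.rpow_one]
    | succ k hk ih =>
      intro l hl
      obtain ⟨j, hj, i, hi1, him, rfl⟩ := (hIk (k + 1) (by omega) l).1 hl
      obtain ⟨-, hmono, htop⟩ := hC2 (k + 1) (by omega) j hj
      have hle : a (j ++ [i]) ≤ a (j ++ [m j]) :=
        le_last_of_lt_succ (f := fun i => a (j ++ [i])) hmono hi1 him
      have hle' : (a (j ++ [i]) : ℝ) ≤ a (j ++ [m j]) := by exact_mod_cast hle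
      have hpow : ((a j : ℝ) + 1) ^ c (k + 1) ≤
          (((a [1] : ℝ) + 1) ^ (C k / C 1)) ^ c (k + 1) :=
        Real.rpow_le_rpow (by positivity) (ih j hj) (by linarith [hc1 (k + 1) (by omega)])
      rw [← Real.rpow_mul hbase.le, div_mul_eq_mul_div, ← hCsucc k hk] at hpow
      linarith
  intro k hk j hj j' hj' hne hlt
  have hCk : 1 ≤ C k := hCge k (by omega)
  have hCk0 : 0 < C k := by linarith
  have hltR : (a j : ℝ) < a j' := by exact_mod_cast hlt
  have hgap := hC3 (k + 1) (by omega) j hj j' hj' hne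
  rw [abs_of_neg (by linarith)] at hgap
  have hj0 : (0 : ℝ) ≤ a j := Nat.cast_nonneg _
  refine le_trans ?_ (rpow_sub_rpow_ge_of_add_one_le (p := 1 / C k) (by positivity)
    ((div_le_one hCk0).2 hCk) (by linarith) (by linarith))
  refine mul_le_mul_of_nonneg_left ?_ (by positivity)
  have hexp : (1 - C k) / C 1 = C k / C 1 * (1 / C k - 1) := by field_simp
  rw [hexp, Real.rpow_mul hbase.le]
  exact Real.rpow_le_rpow_of_nonpos (by linarith) (by linarith [hbound k (by omega) j' hj'])
    (by linarith [(div_le_one hCk0).2 hCk])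
end

section
/- For all R, θ, L, Q > 0 there exists M_1 = M_1(R, θ, L, Q) > 0 with the following property. Let (c_k)_{k≥1} be a real sequence with 1 + θ ≤ c_k ≤ R for all k, set C_k = c_1 ⋯ c_k, let B ⊆ ℕ, and suppose there exist finite index sets I_k ⊆ ℕ^k (k = 1, 2, …), a function a defined on ∪_{k≥1} I_k taking values in B, and a function m : ∪_{k≥1} I_k → ℕ satisfying (C1)–(C4) and a((1)) ≥ M_1. Then for every k ≥ 2 and every j ∈ I_{k−1}, m(j) ≥ Q · a((1))^{(C_k − C_{k−1})/C_1} / (C_k log a((1)))^L. -/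
/-!
Write `A = a((1))` and `P_k = C_k / C_1 = c_2 ⋯ c_k`. Iterating the lower bound in (C2) gives
`log a(j) ≥ P_k log A` for every `j ∈ I_k` (`log_descendant_lower`). The bound in (C4) is the value
at `x = a(j)` of `x ^ (c - 1) (c log x) ^ (-L)`, which is increasing in `x` once
`(c - 1) log x ≥ L` (`exp_mul_rpow_neg_mono`, in the variable `log x`). The choice
`M₁ = exp (L / θ)` puts `A`, hence every `a(j)`, in that range, so `a(j)` may be replaced by
`A ^ P_{k-1}`. Since `(c_k - 1) P_{k-1} = (C_k - C_{k-1}) / C_1` and `c_k P_{k-1} = P_k ≤ C_k`,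
this is the claim.
-/

open Real Set

/-- Monotonicity of `x ^ d * (c * log x) ^ (-L)` for `d * log x ≥ L`, written with `u = log x`. -/
lemma exp_mul_rpow_neg_mono {L d c u v : ℝ} (hL : 0 < L) (hc : 0 < c) (hu : 0 < u)
    (hdu : L ≤ d * u) (huv : u ≤ v) :
    exp (u * d) * (c * u) ^ (-L) ≤ exp (v * d) * (c * v) ^ (-L) := by
  have hv : 0 < v := hu.trans_le huv
  rw [rpow_def_of_pos (mul_pos hc hu), rpow_def_of_pos (mul_pos hc hv), ← exp_add, ← exp_add,
    exp_le_exp, log_mul hc.ne' hu.ne', log_mul hc.ne' hv.ne']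
  have h1 : log v - log u ≤ v / u - 1 := by
    rw [← log_div hv.ne' hu.ne']
    exact log_le_sub_one_of_pos (div_pos hv hu)
  have h2 : L * (v / u - 1) ≤ d * (v - u) := by
    have h3 : 0 ≤ v / u - 1 := by
      rw [sub_nonneg, le_div_iff₀ hu]; linarith
    calc L * (v / u - 1) ≤ d * u * (v / u - 1) := mul_le_mul_of_nonneg_right hdu h3
      _ = d * (v - u) := by field_simp
  have h4 := mul_le_mul_of_nonneg_left h1 hL.le
  linarith

/-- Along the tree, `log (a j)` grows at least by the factor `c_2 ⋯ c_k = C k / C 1`. -/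
lemma log_descendant_lower {c C : ℕ → ℝ} {I : ℕ → Finset (List ℕ)} {a m : List ℕ → ℕ}
    (hc : ∀ k ≥ 1, 1 ≤ c k) (hC1 : 0 < C 1)
    (hC : ∀ k ≥ 1, C (k + 1) = C k * c (k + 1))
    (hI1 : I 1 = {[1]})
    (hI : ∀ k, 2 ≤ k → ∀ l : List ℕ,
      l ∈ I k ↔ ∃ j ∈ I (k - 1), ∃ i : ℕ, 1 ≤ i ∧ i ≤ m j ∧ l = j ++ [i])
    (h2 : ∀ k, 2 ≤ k → ∀ j ∈ I (k - 1),
      ((a j : ℝ) ^ c k ≤ (a (j ++ [1]) : ℝ)) ∧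
      (∀ i : ℕ, 1 ≤ i → i < m j → a (j ++ [i]) < a (j ++ [i + 1])))
    (hA : 0 < log (a [1])) :
    ∀ k ≥ 1, ∀ j ∈ I k, 1 ≤ C k / C 1 ∧ C k / C 1 * log (a [1]) ≤ log (a j) := by
  intro k hk
  induction k, hk using Nat.le_induction with
  | base =>
    intro j hj
    rw [hI1, Finset.mem_singleton] at hj
    subst hj
    rw [div_self hC1.ne']
    simp
  | succ k hk ih =>
    intro l hl
    obtain ⟨j, hj, i, hi1, him, rfl⟩ := (hI (k + 1) (by omega) l).1 hl
    rw [Nat.add_sub_cancel] at hj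
    obtain ⟨hP, hlog⟩ := ih j hj
    obtain ⟨hlow, hmono⟩ := h2 (k + 1) (by omega) j (by simpa using hj)
    have hck := hc (k + 1) (by omega)
    have hPe : C (k + 1) / C 1 = C k / C 1 * c (k + 1) := by rw [hC k hk]; ring
    have hlogj : 0 < log (a j) := (mul_pos (by linarith) hA).trans_le hlog
    -- `log 0 = 0`, so a positive logarithm excludes `a j = 0`
    have hapos : 0 < (a j : ℝ) := by
      rcases (Nat.cast_nonneg (α := ℝ) (a j)).eq_or_lt with h | h
      · rw [← h, log_zero] at hlogj
        exact absurd hlogj (lt_irrefl _)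
      · exact h
    have hfirst : ∀ i, 1 ≤ i → i ≤ m j → a (j ++ [1]) ≤ a (j ++ [i]) := by
      intro i hi
      induction i, hi using Nat.le_induction with
      | base => intro _; exact le_rfl
      | succ n hn ihn => intro h; exact (ihn (by omega)).trans (hmono n hn (by omega)).le
    have hge : (a j : ℝ) ^ c (k + 1) ≤ (a (j ++ [i]) : ℝ) :=
      hlow.trans (by exact_mod_cast hfirst i hi1 him)
    have hlog2 := log_le_log (rpow_pos_of_pos hapos _) hge
    rw [log_rpow hapos] at hlog2
    rw [hPe]
    refine ⟨by nlinarith, le_trans ?_ hlog2⟩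
    calc C k / C 1 * c (k + 1) * log (a [1])
        = c (k + 1) * (C k / C 1 * log (a [1])) := by ring
      _ ≤ c (k + 1) * log (a j) := mul_le_mul_of_nonneg_left hlog (by linarith)

/-- **Lemma 5.5 (number of level intervals).** Tuples in `ℕ^k` are encoded as lists of
length `k`; `(j, i)` is `j ++ [i]`, and the one-entry tuple `(1)` is `[1]`.

For all `R, θ, L, Q > 0` there is `M₁ = M₁(R, θ, L, Q) > 0` with: under (C1)–(C4) with
`1 + θ ≤ c_k ≤ R` and `a((1)) ≥ M₁`, for every `k ≥ 2` and `j ∈ I_{k-1}` one has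
`m(j) ≥ Q a((1))^{(C_k - C_{k-1})/C_1} / (C_k log a((1)))^L`. -/
theorem level_intervals_count_lower_bound
    (R θ L Q : ℝ) (hR : 0 < R) (hθ : 0 < θ) (hL : 0 < L) (hQ : 0 < Q) :
    ∃ M₁ : ℝ, 0 < M₁ ∧
      ∀ c : ℕ → ℝ, (∀ k ≥ 1, 1 + θ ≤ c k ∧ c k ≤ R) →
      ∀ C : ℕ → ℝ, (∀ k ≥ 1, C k = ∏ i ∈ Finset.Icc 1 k, c i) →
      ∀ (B : Set ℕ) (I : ℕ → Finset (List ℕ)) (a m : List ℕ → ℕ),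
        -- index sets live in ℕ^k
        (∀ k ≥ 1, ∀ j ∈ I k, j.length = k) →
        -- `a` takes values in `B`
        (∀ k ≥ 1, ∀ j ∈ I k, a j ∈ B) →
        -- (C1)
        I 1 = {[1]} →
        (∀ k, 2 ≤ k → ∀ l : List ℕ,
          l ∈ I k ↔ ∃ j ∈ I (k - 1), ∃ i : ℕ, 1 ≤ i ∧ i ≤ m j ∧ l = j ++ [i]) →
        -- (C2)
        (∀ k, 2 ≤ k → ∀ j ∈ I (k - 1),
          ((a j : ℝ) ^ c k ≤ (a (j ++ [1]) : ℝ)) ∧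
          (∀ i : ℕ, 1 ≤ i → i < m j → a (j ++ [i]) < a (j ++ [i + 1])) ∧
          ((a (j ++ [m j]) : ℝ) ≤ ((a j : ℝ) + 1) ^ c k - 1)) →
        -- (C3)
        (∀ k, 2 ≤ k → ∀ j ∈ I (k - 1), ∀ j' ∈ I (k - 1), j ≠ j' →
          2 ≤ |(a j : ℝ) - (a j' : ℝ)|) →
        -- (C4)
        (∀ k, 2 ≤ k → ∀ j ∈ I (k - 1),
          Q * (a j : ℝ) ^ (c k - 1) * (c k * Real.log (a j)) ^ (-L) ≤ (m j : ℝ)) →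
        M₁ ≤ (a [1] : ℝ) →
        ∀ k, 2 ≤ k → ∀ j ∈ I (k - 1),
          Q * (a [1] : ℝ) ^ ((C k - C (k - 1)) / C 1) / (C k * Real.log (a [1])) ^ L ≤
            (m j : ℝ) := by
  refine ⟨exp (L / θ), exp_pos _, ?_⟩
  intro c hc C hC B I a m _ _ hI1 hI h2 _ h4 hM k hk j hj
  obtain ⟨n, rfl⟩ : ∃ n, k = n + 1 := ⟨k - 1, by omega⟩
  rw [Nat.add_sub_cancel] at hj ⊢
  have hn : 1 ≤ n := by omega
  have hApos : 0 < (a [1] : ℝ) := (exp_pos _).trans_le hM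
  have hAlog : L / θ ≤ log (a [1]) := (le_log_iff_exp_le hApos).2 hM
  have hA : 0 < log (a [1]) := (div_pos hL hθ).trans_le hAlog
  have hC1 : C 1 = c 1 := by rw [hC 1 le_rfl]; simp
  have hC1ge : 1 ≤ C 1 := by rw [hC1]; linarith [(hc 1 le_rfl).1]
  have hCs : ∀ k ≥ 1, C (k + 1) = C k * c (k + 1) := by
    intro k hk
    rw [hC k hk, hC (k + 1) (by omega), Finset.prod_Icc_succ_top (by omega)]
  obtain ⟨hP, hlog⟩ := log_descendant_lower (fun k hk => by linarith [(hc k hk).1])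
    (by linarith) hCs hI1 hI (fun k hk j hj => ⟨(h2 k hk j hj).1, (h2 k hk j hj).2.1⟩) hA n hn j hj
  have hm := h4 (n + 1) hk j (by simpa using hj)
  refine le_trans ?_ hm
  have hcn := (hc (n + 1) (by omega)).1
  set P := C n / C 1 with hPdef
  set u := log (a [1]) with hu
  have hCn : C n = P * C 1 := by rw [hPdef]; field_simp
  have hexp : (C (n + 1) - C n) / C 1 = P * (c (n + 1) - 1) := by
    rw [hCs n hn, hPdef]; ring
  have hPu : 0 < P * u := mul_pos (by linarith) hA
  have hlogj : 0 < log (a j) := hPu.trans_le hlog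
  -- `log 0 = 0`, so a positive logarithm excludes `a j = 0`
  have hapos : 0 < (a j : ℝ) := by
    rcases (Nat.cast_nonneg (α := ℝ) (a j)).eq_or_lt with h | h
    · rw [← h, log_zero] at hlogj
      exact absurd hlogj (lt_irrefl _)
    · exact h
  have hLu : L ≤ (c (n + 1) - 1) * (P * u) := by
    have e1 : L ≤ u * θ := (div_le_iff₀ hθ).1 hAlog
    have e2 : u ≤ P * u := le_mul_of_one_le_left hA.le hP
    calc L ≤ θ * u := by linarith
      _ ≤ (c (n + 1) - 1) * (P * u) :=
        mul_le_mul (by linarith) e2 hA.le (by linarith)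
  have hmono := exp_mul_rpow_neg_mono hL (c := c (n + 1)) (by linarith) hPu hLu hlog
  have hcPu : 0 < c (n + 1) * (P * u) := mul_pos (by linarith) hPu
  have hle : c (n + 1) * (P * u) ≤ C (n + 1) * u := by
    have e : C (n + 1) * u = c (n + 1) * (P * u) * C 1 := by rw [hCs n hn, hCn]; ring
    rw [e]
    exact le_mul_of_one_le_right hcPu.le hC1ge
  have hden : (C (n + 1) * u) ^ (-L) ≤ (c (n + 1) * (P * u)) ^ (-L) :=
    rpow_le_rpow_of_nonpos hcPu hle (by linarith)
  rw [hexp, rpow_def_of_pos hApos, rpow_def_of_pos hapos, ← hu, div_eq_mul_inv,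
    ← rpow_neg (hcPu.trans_le hle).le, mul_assoc, mul_assoc]
  refine mul_le_mul_of_nonneg_left (le_trans ?_ hmono) hQ.le
  rw [show u * (P * (c (n + 1) - 1)) = P * u * (c (n + 1) - 1) by ring]
  exact mul_le_mul_of_nonneg_left hden (exp_pos _).le
end
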